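/- Let (Y,d) be a finite metric space with exactly n elements y_1,…,y_n, let a > 2 be an integer, and suppose diam(Y) > (2a+1)^{n+2}. Define A_0(i) = {y_i}, d_0 = 1, and inductively A_m(i) = {y ∈ Y : d(y, A_{m-1}(i)) ≤ a·d_{m-1}} and d_m = max over 1 ≤ j ≤ n of max{diam(A_m(j)), 1}; let k be the minimal index with A_k(i) = A_{k+1}(i) for all i, and set A_i = A_k(i). Then for every i ∈ {1,…,n}, A_i ≠ Y. -/

import Mathlib

/-- The iterative "galaxy" construction on a finite metric space with points `y 1, …, y n`:
`A 0 i = {y i}`, `d 0 = 1`, and inductively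
`A (m+1) i = {z | d(z, A m i) ≤ a · d m}`, `d (m+1) = max_j max (diam (A (m+1) j)) 1`.
`galaxy a y m = (A m, d m)`. -/
noncomputable def galaxy {Y : Type*} [MetricSpace Y] {n : ℕ} (a : ℕ) (y : Fin n → Y) :
    ℕ → (Fin n → Set Y) × ℝ
  | 0 => (fun i => {y i}, 1)
  | m + 1 =>
      let p := galaxy a y m
      let A : Fin n → Set Y := fun i => {z : Y | Metric.infDist z (p.1 i) ≤ (a : ℝ) * p.2}
      (A, ⨆ j, max (Metric.diam (A j)) 1)

/-- If the diameter is large compared with the number of classes of `f`, then merging close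
classes ends with a coloring whose classes are small, far apart, and not all of `Y`. -/
theorem exists_separated_coloring {Y : Type*} [MetricSpace Y] [Fintype Y] [DecidableEq Y]
    {a : ℕ} (c : ℕ) (f : Y → Y) (D : ℝ) (hc : (Finset.univ.image f).card ≤ c) (hD : 1 ≤ D)
    (hf : ∀ x y, f x = f y → dist x y ≤ D)
    (hdiam : D * (2 * a + 1) ^ c < Metric.diam (Set.univ : Set Y)) :
    ∃ (g : Y → Y) (E : ℝ), 1 ≤ E ∧ (∀ x y, g x = g y → dist x y ≤ E) ∧
      (∀ x y, dist x y ≤ a * E → g x = g y) ∧ E < Metric.diam (Set.univ : Set Y) := by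
  induction c generalizing f D with
  | zero =>
    have hY : IsEmpty Y := by simpa [Finset.univ_eq_empty_iff] using hc
    exact ⟨f, D, hD, hf, fun x => hY.elim x, by simpa using hdiam⟩
  | succ c ih =>
    have ha : (0 : ℝ) ≤ a := a.cast_nonneg
    by_cases hsep : ∀ x y, dist x y ≤ a * D → f x = f y
    · refine ⟨f, D, hD, hf, hsep, lt_of_le_of_lt ?_ hdiam⟩
      exact le_mul_of_one_le_right (by linarith) (one_le_pow₀ (by linarith))
    push Not at hsep
    obtain ⟨x, y, hxy, hne⟩ := hsep
    refine ih (fun z => if f z = f x then f y else f z) (D * (2 * a + 1)) ?_ ?_ ?_ ?_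
    · have hsub : Finset.univ.image (fun z => if f z = f x then f y else f z) ⊆
          (Finset.univ.image f).erase (f x) := by
        intro w hw
        simp only [Finset.mem_image, Finset.mem_univ, true_and] at hw
        obtain ⟨z, rfl⟩ := hw
        split_ifs with h
        · simp [Ne.symm hne]
        · simp [h]
      have hcard := Finset.card_le_card hsub
      rw [Finset.card_erase_of_mem (by simp)] at hcard
      omega
    · nlinarith
    · have hcross : ∀ u v, f u = f x → f v = f y → dist u v ≤ D + a * D + D := by
        intro u v hu hv
        have h₁ := hf u x hu
        have h₂ := hf y v hv.symm
        linarith [dist_triangle4 u x y v]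
      -- two old classes at distance at most `a * D` occur only when `0 < a`
      have hpos : D + a * D + D ≤ D * (2 * a + 1) := by
        rcases Nat.eq_zero_or_pos a with h | h
        · subst h
          have : dist x y = 0 := le_antisymm (by simpa using hxy) dist_nonneg
          exact absurd (congrArg f (dist_eq_zero.mp this)) hne
        · have : (1 : ℝ) ≤ a := by exact_mod_cast h
          nlinarith
      have hle : D ≤ D * (2 * a + 1) := by nlinarith
      intro u v huv
      split_ifs at huv with hu hv hv
      · exact (hf u v (hu.trans hv.symm)).trans hle
      · exact (hcross u v hu huv.symm).trans hpos
      · rw [dist_comm]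
        exact (hcross v u hv huv).trans hpos
      · exact (hf u v huv).trans hle
    · calc D * (2 * a + 1) * (2 * a + 1) ^ c = D * (2 * a + 1) ^ (c + 1) := by ring
        _ < _ := hdiam

/-- Galaxies never leave the classes of a coloring with small, well-separated classes. -/
theorem galaxy_subset_class {Y : Type*} [MetricSpace Y] [Finite Y] {n a : ℕ} (y : Fin n → Y)
    {g : Y → Y} {E : ℝ} (hE : 1 ≤ E) (hsmall : ∀ u v, g u = g v → dist u v ≤ E)
    (hsep : ∀ u v, dist u v ≤ a * E → g u = g v) (m : ℕ) :
    (∀ i, y i ∈ (galaxy a y m).1 i ∧ ∀ z ∈ (galaxy a y m).1 i, g z = g (y i)) ∧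
      0 ≤ (galaxy a y m).2 ∧ (galaxy a y m).2 ≤ E := by
  induction m with
  | zero => simpa [galaxy] using hE
  | succ m ih =>
    obtain ⟨hA, hd₀, hdE⟩ := ih
    have ha : (0 : ℝ) ≤ a := a.cast_nonneg
    have hclass : ∀ i, ∀ z ∈ (galaxy a y (m + 1)).1 i, g z = g (y i) := by
      intro i z hz
      replace hz : Metric.infDist z ((galaxy a y m).1 i) ≤ a * (galaxy a y m).2 := hz
      obtain ⟨w, hw, hzw⟩ :=
        (Set.toFinite ((galaxy a y m).1 i)).isCompact.exists_infDist_eq_dist ⟨y i, (hA i).1⟩ z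
      rw [hzw] at hz
      exact (hsep z w (hz.trans (mul_le_mul_of_nonneg_left hdE ha))).trans ((hA i).2 w hw)
    refine ⟨fun i => ⟨?_, hclass i⟩, ?_, ?_⟩
    · change Metric.infDist (y i) ((galaxy a y m).1 i) ≤ a * (galaxy a y m).2
      rw [Metric.infDist_zero_of_mem (hA i).1]
      positivity
    · exact Real.iSup_nonneg fun j => zero_le_one.trans (le_max_right _ _)
    · refine Real.iSup_le (fun j => max_le ?_ hE) (by linarith)
      exact Metric.diam_le_of_forall_dist_le (by linarith) fun u hu v hv =>
        hsmall u v ((hclass j u hu).trans (hclass j v hv).symm)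

/-- In the galaxy construction on a finite metric space with `n` elements, an integer `a > 2`
and diameter greater than `(2a+1)^(n+2)`, if `k` is the minimal index at which the
construction stabilizes, then none of the sets `A k i` is all of `Y`. -/
theorem galaxy_ne_univ {Y : Type*} [MetricSpace Y] [Fintype Y] {n : ℕ} (a : ℕ) (ha : 2 < a)
    (y : Fin n → Y) (hy : Function.Bijective y) (hcard : Fintype.card Y = n)
    (hdiam : ((2 * a + 1 : ℕ) : ℝ) ^ (n + 2) < Metric.diam (Set.univ : Set Y))
    (k : ℕ)
    (hk : IsLeast {m : ℕ | ∀ i : Fin n, (galaxy a y m).1 i = (galaxy a y (m + 1)).1 i} k) :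
    ∀ i : Fin n, (galaxy a y k).1 i ≠ Set.univ := by
  classical
  intro i huniv
  have hstart : (1 : ℝ) * (2 * a + 1) ^ n < Metric.diam (Set.univ : Set Y) := by
    refine lt_of_le_of_lt ?_ hdiam
    push_cast
    rw [one_mul]
    exact pow_le_pow_right₀ (by linarith [a.cast_nonneg (α := ℝ)]) (by omega)
  obtain ⟨g, E, hE, hsmall, hsep, hlt⟩ := exists_separated_coloring n id 1
    (by simp [hcard]) le_rfl (fun u v huv => by simp [show u = v from huv]) hstart
  have hclass : ∀ z, g z = g (y i) := fun z =>
    ((galaxy_subset_class y hE hsmall hsep k).1 i).2 z (huniv ▸ Set.mem_univ z)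
  refine hlt.not_ge (Metric.diam_le_of_forall_dist_le (by linarith) fun u _ v _ => ?_)
  exact hsmall u v ((hclass u).trans (hclass v).symm)
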